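/- Assume f is continuous and satisfies the Lipschitz condition (A₂) with constant w > 0. Let x, y : [0,1] → ℝ be continuously differentiable with x(0) = y(0) = 0 and x(1) = y(1) = 0. Then for every t ∈ [0,1], |(Zx)(t) − (Zy)(t)| ≤ ψ₁·‖x − y‖, where (Zx)(t) = ∫₀¹ G(t,s)·f(s, x(s), x'(s)) ds + ∫₀¹ H(t,s)·x(s) ds and similarly for Zy. -/

import Mathlib

/-!
Both differences of integrals are integrals of a kernel against a single function, so the estimate
reduces to bounding `∫ |G(t,s)| ds` and `∫ |H(t,s)| |u(s)| ds` for `u = x - y`.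

The factors `(α+2) t^(α+1) - (α+1) t^(α+2)` and `t^(α+1) - t^(α+2)` of the kernels are at most `3`
and `1` in absolute value, and
`∫₀¹ (t-s)₊^(a-1) ds = t^a / a ≤ 1 / a`. For `G` this gives the constant
`(1 + 3 + (α+β)) / Γ(α+β+1)`, at most `8 / Γ(α+β+1)`. For `H` the factor `(1-s)^(α-2)` is not
integrable; the boundary condition `u(1) = 0` and the mean value inequality give
`|u(s)| ≤ ‖u'‖ (1-s)`, which lowers the singularity to `(1-s)^(α-1)` and yields the constant
`5 |γ| / Γ(α+1)`. The same bound, applied to `x` and `y` separately, makes all integrals converge.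
-/

open Set intervalIntegral

noncomputable def GreenG (α β : ℝ) (t s : ℝ) : ℝ :=
  (1 / Real.Gamma (α + β)) *
    ((if s ≤ t then (t - s) ^ (α + β - 1) else 0)
      + ((α + 1) * t ^ (α + 2) - (α + 2) * t ^ (α + 1)) * (1 - s) ^ (α + β - 1)
      + (α + β - 1) * (t ^ (α + 1) - t ^ (α + 2)) * (1 - s) ^ (α + β - 2))

noncomputable def GreenH (α γ : ℝ) (t s : ℝ) : ℝ :=
  (γ / Real.Gamma α) *
    (-(if s ≤ t then (t - s) ^ (α - 1) else 0)
      + ((α + 2) * t ^ (α + 1) - (α + 1) * t ^ (α + 2)) * (1 - s) ^ (α - 1)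
      + (α - 1) * (t ^ (α + 2) - t ^ (α + 1)) * (1 - s) ^ (α - 2))

/-- The truncated power `(t-s)₊^(a-1)`, the first term (up to sign and a constant factor)
of both Green kernels: `a = α + β` for `G` and `a = α` for `H`. At `s = t` it is `0 ^ (a - 1)`, which
has the finite junk value `0` when `a < 1`. -/
noncomputable def truncPow (a t s : ℝ) : ℝ := if s ≤ t then (t - s) ^ (a - 1) else 0

lemma truncPow_nonneg (a t s : ℝ) : 0 ≤ truncPow a t s := by
  unfold truncPow
  split_ifs with h
  · exact Real.rpow_nonneg (by linarith) _
  · exact le_rfl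

lemma measurable_truncPow (a t : ℝ) : Measurable (truncPow a t) := by
  unfold truncPow
  exact Measurable.ite measurableSet_Iic (by fun_prop) measurable_const

lemma intervalIntegrable_sub_rpow {a : ℝ} (ha : 0 < a) (t : ℝ) :
    IntervalIntegrable (fun s : ℝ => (t - s) ^ (a - 1)) MeasureTheory.volume 0 t := by
  have h := (intervalIntegral.intervalIntegrable_rpow' (a := 0) (b := t)
    (r := a - 1) (by linarith)).comp_sub_left t
  simpa using h.symm

lemma integral_sub_rpow {a : ℝ} (ha : 0 < a) (t : ℝ) :
    ∫ s in (0:ℝ)..t, (t - s) ^ (a - 1) = t ^ a / a := by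
  rw [intervalIntegral.integral_comp_sub_left (fun s : ℝ => s ^ (a - 1)) t,
    integral_rpow (Or.inl (by linarith))]
  simp [Real.zero_rpow ha.ne']

lemma truncPow_integral {a t : ℝ} (ha : 0 < a) (ht : t ∈ Icc (0:ℝ) 1) :
    IntervalIntegrable (truncPow a t) MeasureTheory.volume 0 1 ∧
      ∫ s in (0:ℝ)..1, truncPow a t s = t ^ a / a := by
  have e1 : EqOn (fun s : ℝ => (t - s) ^ (a - 1)) (truncPow a t) (Set.uIoc 0 t) := by
    intro s hs
    rw [uIoc_of_le ht.1] at hs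
    simp [truncPow, hs.2]
  have e2 : EqOn (fun _ : ℝ => (0:ℝ)) (truncPow a t) (Set.uIoc t 1) := by
    intro s hs
    rw [uIoc_of_le ht.2] at hs
    simp [truncPow, not_le.2 hs.1]
  have i1 : IntervalIntegrable (truncPow a t) MeasureTheory.volume 0 t :=
    (intervalIntegrable_sub_rpow ha t).congr e1
  have i2 : IntervalIntegrable (truncPow a t) MeasureTheory.volume t 1 :=
    (intervalIntegrable_const (c := (0:ℝ))).congr e2
  refine ⟨i1.trans i2, ?_⟩
  rw [← intervalIntegral.integral_add_adjacent_intervals i1 i2,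
    ← intervalIntegral.integral_congr_ae (Filter.Eventually.of_forall e1),
    ← intervalIntegral.integral_congr_ae (Filter.Eventually.of_forall e2),
    integral_sub_rpow ha]
  simp

/-- Bounds for the coefficients in `t` shared by the two kernels. -/
lemma coeff_bounds {α t : ℝ} (hα0 : 0 < α) (hα1 : α ≤ 1) (ht : t ∈ Icc (0:ℝ) 1) :
    |(α + 2) * t ^ (α + 1) - (α + 1) * t ^ (α + 2)| ≤ 3 ∧
      0 ≤ t ^ (α + 1) - t ^ (α + 2) ∧ t ^ (α + 1) - t ^ (α + 2) ≤ 1 := by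
  have h1 : 0 ≤ t ^ (α + 1) := Real.rpow_nonneg ht.1 _
  have h2 : 0 ≤ t ^ (α + 2) := Real.rpow_nonneg ht.1 _
  have h3 : t ^ (α + 1) ≤ 1 := Real.rpow_le_one ht.1 ht.2 (by linarith)
  have h4 : t ^ (α + 2) ≤ t ^ (α + 1) := by
    have e : t ^ (α + 2) = t ^ (α + 1) * t := by
      rw [show α + 2 = (α + 1) + 1 by ring, Real.rpow_add_one' ht.1 (by linarith)]
    rw [e]
    exact mul_le_of_le_one_right h1 ht.2
  refine ⟨abs_le.2 ⟨?_, ?_⟩, by linarith, by linarith⟩ <;> nlinarith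

/-- A kernel dominated on `[0,1]` by an integrable function is integrable, with the integral
bounded accordingly. -/
lemma kernel_integral_bound {F b : ℝ → ℝ}
    (hF : MeasureTheory.AEStronglyMeasurable F (MeasureTheory.volume.restrict (Ioc (0:ℝ) 1)))
    (hb : IntervalIntegrable b MeasureTheory.volume 0 1)
    (h : ∀ s ∈ Icc (0:ℝ) 1, |F s| ≤ b s) :
    IntervalIntegrable F MeasureTheory.volume 0 1 ∧
      |∫ s in (0:ℝ)..1, F s| ≤ ∫ s in (0:ℝ)..1, b s := by
  constructor
  · rw [intervalIntegrable_iff_integrableOn_Ioc_of_le zero_le_one] at hb ⊢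
    refine MeasureTheory.Integrable.mono' hb hF ?_
    filter_upwards [MeasureTheory.ae_restrict_mem measurableSet_Ioc] with s hs
    exact h s (Ioc_subset_Icc_self hs)
  · rw [← Real.norm_eq_abs]
    refine intervalIntegral.norm_integral_le_of_norm_le zero_le_one ?_ hb
    exact Filter.Eventually.of_forall fun s hs => h s (Ioc_subset_Icc_self hs)

lemma aesm_kernel_mul {K u : ℝ → ℝ} (hK : Measurable K) (hu : ContinuousOn u (Icc 0 1)) :
    MeasureTheory.AEStronglyMeasurable (fun s => K s * u s)
      (MeasureTheory.volume.restrict (Ioc (0:ℝ) 1)) :=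
  hK.aestronglyMeasurable.mul
    ((hu.mono Ioc_subset_Icc_self).aestronglyMeasurable measurableSet_Ioc)

lemma greenG_bound {α β : ℝ} (hα0 : 0 < α) (hα1 : α ≤ 1) (hβ2 : 2 < β) (hβ3 : β ≤ 3)
    {t : ℝ} (ht : t ∈ Icc (0:ℝ) 1) {v : ℝ → ℝ} (hv : ContinuousOn v (Icc 0 1))
    {C : ℝ} (hC : ∀ s ∈ Icc (0:ℝ) 1, |v s| ≤ C) :
    IntervalIntegrable (fun s => GreenG α β t s * v s) MeasureTheory.volume 0 1 ∧
      |∫ s in (0:ℝ)..1, GreenG α β t s * v s| ≤ 14 * C / Real.Gamma (α + β + 1) := by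
  have hC0 : 0 ≤ C := (abs_nonneg _).trans (hC 0 (by simp))
  have hΓ : 0 < Real.Gamma (α + β) := Real.Gamma_pos_of_pos (by linarith)
  obtain ⟨cA, cB0, cB1⟩ := coeff_bounds hα0 hα1 ht
  have hmeas : Measurable (GreenG α β t) := by
    have := measurable_truncPow (α + β) t
    unfold truncPow at this
    unfold GreenG
    fun_prop
  obtain ⟨i1, e1⟩ := truncPow_integral (a := α + β) (by linarith) ht
  have i2 := intervalIntegrable_sub_rpow (a := α + β) (by linarith) 1
  have e2 := integral_sub_rpow (a := α + β) (by linarith) 1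
  have i3 := intervalIntegrable_sub_rpow (a := α + β - 1) (by linarith) 1
  have e3 := integral_sub_rpow (a := α + β - 1) (by linarith) 1
  rw [show α + β - 1 - 1 = α + β - 2 by ring] at i3 e3
  have ib := ((i1.add (i2.const_mul 3)).add (i3.const_mul (α + β - 1))).const_mul
    (C / Real.Gamma (α + β))
  have key := kernel_integral_bound (aesm_kernel_mul hmeas hv) ib (by
    intro s hs
    have p1 := truncPow_nonneg (α + β) t s
    have p2 : 0 ≤ (1 - s) ^ (α + β - 1) := Real.rpow_nonneg (by linarith [hs.2]) _
    have p3 : 0 ≤ (1 - s) ^ (α + β - 2) := Real.rpow_nonneg (by linarith [hs.2]) _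
    have q : |truncPow (α + β) t s
        + ((α + 1) * t ^ (α + 2) - (α + 2) * t ^ (α + 1)) * (1 - s) ^ (α + β - 1)
        + (α + β - 1) * (t ^ (α + 1) - t ^ (α + 2)) * (1 - s) ^ (α + β - 2)|
        ≤ truncPow (α + β) t s + 3 * (1 - s) ^ (α + β - 1)
          + (α + β - 1) * (1 - s) ^ (α + β - 2) := by
      refine (abs_add_three _ _ _).trans ?_
      rw [abs_of_nonneg p1, abs_mul, abs_of_nonneg p2, abs_mul, abs_of_nonneg p3, abs_mul,
        abs_of_nonneg cB0, abs_of_nonneg (show 0 ≤ α + β - 1 by linarith), abs_sub_comm]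
      gcongr
      exact mul_le_of_le_one_right (by linarith) cB1
    have : |GreenG α β t s * v s| ≤ (1 / Real.Gamma (α + β)) *
        (truncPow (α + β) t s + 3 * (1 - s) ^ (α + β - 1)
          + (α + β - 1) * (1 - s) ^ (α + β - 2)) * C := by
      unfold GreenG
      rw [abs_mul, abs_mul, abs_of_pos (show 0 < 1 / Real.Gamma (α + β) by positivity)]
      gcongr
      · exact mul_nonneg (by positivity) ((abs_nonneg _).trans q)
      · exact q
      · exact hC s hs
    refine this.trans (le_of_eq ?_)
    ring)
  refine ⟨key.1, key.2.trans ?_⟩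
  rw [intervalIntegral.integral_const_mul,
    intervalIntegral.integral_add (i1.add (i2.const_mul 3)) (i3.const_mul _),
    intervalIntegral.integral_add i1 (i2.const_mul 3), intervalIntegral.integral_const_mul,
    intervalIntegral.integral_const_mul, e1, e2, e3, Real.Gamma_add_one (by linarith),
    Real.one_rpow, Real.one_rpow]
  have ht1 : t ^ (α + β) ≤ 1 := Real.rpow_le_one ht.1 ht.2 (by linarith)
  have hab : 0 < α + β := by linarith
  have hab1 : α + β - 1 ≠ 0 := by linarith
  have : t ^ (α + β) / (α + β) + 3 * (1 / (α + β)) + (α + β - 1) * (1 / (α + β - 1))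
      ≤ 14 / (α + β) := by
    rw [mul_one_div_cancel hab1, ← sub_nonneg]
    have : 14 / (α + β) - (t ^ (α + β) / (α + β) + 3 * (1 / (α + β)) + 1)
      = (11 - t ^ (α + β) - (α + β)) / (α + β) := by field_simp; ring
    rw [this]
    exact div_nonneg (by linarith) hab.le
  calc _ ≤ C / Real.Gamma (α + β) * (14 / (α + β)) := by gcongr
    _ = _ := by field_simp

/-- The vanishing rate `|u s| ≤ C (1 - s)` compensates the factor `(1 - s) ^ (α - 2)` of `H`. -/
lemma greenH_bound {α : ℝ} (γ : ℝ) (hα0 : 0 < α) (hα1 : α ≤ 1)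
    {t : ℝ} (ht : t ∈ Icc (0:ℝ) 1) {u : ℝ → ℝ} (hu : ContinuousOn u (Icc 0 1))
    {C : ℝ} (hC0 : 0 ≤ C) (hC : ∀ s ∈ Icc (0:ℝ) 1, |u s| ≤ C * (1 - s)) :
    IntervalIntegrable (fun s => GreenH α γ t s * u s) MeasureTheory.volume 0 1 ∧
      |∫ s in (0:ℝ)..1, GreenH α γ t s * u s| ≤ 8 * |γ| / Real.Gamma (α + 1) * C := by
  have hΓ : 0 < Real.Gamma α := Real.Gamma_pos_of_pos hα0
  obtain ⟨cA, cB0, cB1⟩ := coeff_bounds hα0 hα1 ht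
  have hmeas : Measurable (GreenH α γ t) := by
    have := measurable_truncPow α t
    unfold truncPow at this
    unfold GreenH
    fun_prop
  obtain ⟨i1, e1⟩ := truncPow_integral hα0 ht
  have i2 := intervalIntegrable_sub_rpow hα0 1
  have e2 := integral_sub_rpow hα0 1
  have ib := (i1.add (i2.const_mul 4)).const_mul (|γ| / Real.Gamma α * C)
  have key := kernel_integral_bound (aesm_kernel_mul hmeas hu) ib (by
    intro s hs
    have hs1 : 0 ≤ 1 - s := by linarith [hs.2]
    have p1 := truncPow_nonneg α t s
    have p2 : 0 ≤ (1 - s) ^ (α - 1) := Real.rpow_nonneg hs1 _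
    have p3 : 0 ≤ (1 - s) ^ (α - 2) := Real.rpow_nonneg hs1 _
    have hus : |u s| ≤ C := (hC s hs).trans (mul_le_of_le_one_right hC0 (by linarith [hs.1]))
    -- At `s = 1` the product rule for powers is unavailable, but the left side is zero: `u 1 = 0`.
    have hsing : (1 - s) ^ (α - 2) * |u s| ≤ C * (1 - s) ^ (α - 1) := by
      rcases hs1.eq_or_lt with h0 | h0
      · have : |u s| ≤ 0 := by simpa [← h0] using hC s hs
        rw [le_antisymm this (abs_nonneg _), mul_zero]
        positivity
      · calc (1 - s) ^ (α - 2) * |u s| ≤ (1 - s) ^ (α - 2) * (C * (1 - s)) := by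
              gcongr; exact hC s hs
          _ = C * ((1 - s) ^ (α - 2) * (1 - s)) := by ring
          _ = C * (1 - s) ^ (α - 1) := by
              rw [← Real.rpow_add_one h0.ne', show α - 2 + 1 = α - 1 by ring]
    have q : |-truncPow α t s
        + ((α + 2) * t ^ (α + 1) - (α + 1) * t ^ (α + 2)) * (1 - s) ^ (α - 1)
        + (α - 1) * (t ^ (α + 2) - t ^ (α + 1)) * (1 - s) ^ (α - 2)|
        ≤ truncPow α t s + 3 * (1 - s) ^ (α - 1) + (1 - s) ^ (α - 2) := by
      refine (abs_add_three _ _ _).trans ?_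
      rw [abs_neg, abs_of_nonneg p1, abs_mul, abs_of_nonneg p2, abs_mul _ ((1 - s) ^ (α - 2)),
        abs_of_nonneg p3]
      gcongr
      refine mul_le_of_le_one_left p3 ?_
      rw [abs_mul, abs_sub_comm α, abs_sub_comm (t ^ (α + 2)), abs_of_nonneg cB0,
        abs_of_nonneg (sub_nonneg.2 hα1)]
      exact mul_le_one₀ (by linarith) cB0 cB1
    calc |GreenH α γ t s * u s|
        ≤ |γ| / Real.Gamma α *
          (truncPow α t s + 3 * (1 - s) ^ (α - 1) + (1 - s) ^ (α - 2)) * |u s| := by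
          unfold GreenH
          rw [abs_mul, abs_mul, abs_div, abs_of_pos hΓ]
          gcongr
          exact q
      _ = |γ| / Real.Gamma α * ((truncPow α t s + 3 * (1 - s) ^ (α - 1)) * |u s|
            + (1 - s) ^ (α - 2) * |u s|) := by ring
      _ ≤ |γ| / Real.Gamma α * ((truncPow α t s + 3 * (1 - s) ^ (α - 1)) * C
            + C * (1 - s) ^ (α - 1)) := by gcongr
      _ = |γ| / Real.Gamma α * C * (truncPow α t s + 4 * (1 - s) ^ (α - 1)) := by ring)
  refine ⟨key.1, key.2.trans ?_⟩
  rw [intervalIntegral.integral_const_mul, intervalIntegral.integral_add i1 (i2.const_mul 4),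
    intervalIntegral.integral_const_mul, e1, e2, Real.Gamma_add_one hα0.ne', Real.one_rpow]
  have ht1 : t ^ α ≤ 1 := Real.rpow_le_one ht.1 ht.2 hα0.le
  calc |γ| / Real.Gamma α * C * (t ^ α / α + 4 * (1 / α))
      = |γ| / Real.Gamma α * C * ((t ^ α + 4) / α) := by ring
    _ ≤ |γ| / Real.Gamma α * C * (8 / α) := by gcongr; linarith
    _ = _ := by field_simp

/-- Mean value inequality on `[s,1]` for a function vanishing at `1`. -/
lemma abs_le_of_deriv_bound {u u' : ℝ → ℝ} {C : ℝ}
    (hu : ∀ t ∈ Icc (0:ℝ) 1, HasDerivWithinAt u (u' t) (Icc (0:ℝ) 1) t)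
    (hC : ∀ s ∈ Icc (0:ℝ) 1, |u' s| ≤ C) (h1 : u 1 = 0) :
    ∀ s ∈ Icc (0:ℝ) 1, |u s| ≤ C * (1 - s) := by
  intro s hs
  have := (convex_Icc (0:ℝ) 1).norm_image_sub_le_of_norm_hasDerivWithin_le hu hC
    (show (1:ℝ) ∈ Icc (0:ℝ) 1 by simp) hs
  simp only [h1, sub_zero, Real.norm_eq_abs] at this
  rwa [abs_sub_comm, abs_of_nonneg (by linarith [hs.2] : (0:ℝ) ≤ 1 - s)] at this

lemma abs_le_iSup_Icc {g : ℝ → ℝ} (hg : ContinuousOn g (Icc 0 1)) :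
    ∀ s ∈ Icc (0:ℝ) 1, |g s| ≤ ⨆ t : Icc (0:ℝ) 1, |g t| := by
  intro s hs
  have hb : BddAbove (range fun t : Icc (0:ℝ) 1 => |g t|) := by
    have := isCompact_Icc.bddAbove_image hg.abs
    rwa [image_eq_range] at this
  exact le_ciSup hb ⟨s, hs⟩

theorem lipschitz_sup_estimate (α β γ : ℝ) (hα0 : 0 < α) (hα1 : α ≤ 1)
    (hβ2 : 2 < β) (hβ3 : β ≤ 3) (f : ℝ → ℝ → ℝ → ℝ)
    (hf : ContinuousOn (fun p : ℝ × ℝ × ℝ => f p.1 p.2.1 p.2.2)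
      (Set.Icc 0 1 ×ˢ (Set.univ : Set (ℝ × ℝ))))
    (w : ℝ) (hw : 0 < w)
    (hlip : ∀ t ∈ Set.Icc (0:ℝ) 1, ∀ p q u v : ℝ,
      |f t p q - f t u v| ≤ w * (|p - u| + |q - v|))
    (ψ₁ : ℝ)
    (hψ₁ : ψ₁ = 14 * w / Real.Gamma (α + β + 1) + 8 * |γ| / Real.Gamma (α + 1))
    (x x' y y' : ℝ → ℝ)
    (hx : ∀ t ∈ Set.Icc (0:ℝ) 1, HasDerivWithinAt x (x' t) (Set.Icc (0:ℝ) 1) t)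
    (hx'c : ContinuousOn x' (Set.Icc 0 1)) (hx0 : x 0 = 0) (hx1 : x 1 = 0)
    (hy : ∀ t ∈ Set.Icc (0:ℝ) 1, HasDerivWithinAt y (y' t) (Set.Icc (0:ℝ) 1) t)
    (hy'c : ContinuousOn y' (Set.Icc 0 1)) (hy0 : y 0 = 0) (hy1 : y 1 = 0) :
    ∀ t ∈ Set.Icc (0:ℝ) 1,
      |((∫ s in (0:ℝ)..1, GreenG α β t s * f s (x s) (x' s))
          + ∫ s in (0:ℝ)..1, GreenH α γ t s * x s)
        - ((∫ s in (0:ℝ)..1, GreenG α β t s * f s (y s) (y' s))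
          + ∫ s in (0:ℝ)..1, GreenH α γ t s * y s)|
      ≤ ψ₁ * ((⨆ t : Set.Icc (0:ℝ) 1, |x t - y t|)
          + ⨆ t : Set.Icc (0:ℝ) 1, |x' t - y' t|) := by
  intro t ht
  have hxc : ContinuousOn x (Icc 0 1) := fun s hs => (hx s hs).continuousWithinAt
  have hyc : ContinuousOn y (Icc 0 1) := fun s hs => (hy s hs).continuousWithinAt
  have hfc : ∀ z z' : ℝ → ℝ, ContinuousOn z (Icc 0 1) → ContinuousOn z' (Icc 0 1) →
      ContinuousOn (fun s => f s (z s) (z' s)) (Icc 0 1) := fun z z' hz hz' =>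
    hf.comp (continuousOn_id.prodMk (hz.prodMk hz')) fun s hs => ⟨hs, mem_univ _⟩
  have hfx := hfc x x' hxc hx'c
  have hfy := hfc y y' hyc hy'c
  have m0 := abs_le_iSup_Icc (hxc.sub hyc)
  have m1 := abs_le_iSup_Icc (hx'c.sub hy'c)
  simp only [Pi.sub_apply] at m0 m1
  set M := ⨆ t : Icc (0:ℝ) 1, |x t - y t|
  set M' := ⨆ t : Icc (0:ℝ) 1, |x' t - y' t|
  have hM : 0 ≤ M := (abs_nonneg _).trans (m0 0 (by simp))
  have hM' : 0 ≤ M' := (abs_nonneg _).trans (m1 0 (by simp))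
  have gx := (greenG_bound hα0 hα1 hβ2 hβ3 ht hfx (abs_le_iSup_Icc hfx)).1
  have gy := (greenG_bound hα0 hα1 hβ2 hβ3 ht hfy (abs_le_iSup_Icc hfy)).1
  have bx := abs_le_iSup_Icc hx'c
  have bdy := abs_le_iSup_Icc hy'c
  have ix := (greenH_bound γ hα0 hα1 ht hxc ((abs_nonneg _).trans (bx 0 (by simp)))
    (abs_le_of_deriv_bound hx bx hx1)).1
  have iy := (greenH_bound γ hα0 hα1 ht hyc ((abs_nonneg _).trans (bdy 0 (by simp)))
    (abs_le_of_deriv_bound hy bdy hy1)).1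
  have G := (greenG_bound hα0 hα1 hβ2 hβ3 ht (hfx.sub hfy) (C := w * (M + M'))
    fun s hs => (hlip s hs _ _ _ _).trans (by gcongr; exacts [m0 s hs, m1 s hs])).2
  have H := (greenH_bound γ hα0 hα1 ht (hxc.sub hyc) (C := M + M') (by positivity)
    (abs_le_of_deriv_bound (u' := fun s => x' s - y' s) (fun s hs => (hx s hs).sub (hy s hs))
      (fun s hs => (m1 s hs).trans (by linarith)) (by simp [hx1, hy1]))).2
  simp only [Pi.sub_apply, mul_sub] at G H
  rw [intervalIntegral.integral_sub gx gy] at G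
  rw [intervalIntegral.integral_sub ix iy] at H
  rw [add_sub_add_comm]
  refine (abs_add_le _ _).trans ((add_le_add G H).trans (le_of_eq ?_))
  rw [hψ₁]
  ring
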